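/- (Almost sure convergence of Q-learning with i.i.d. samples.) Consider a finite MDP with discount γ ∈ [0,1) and optimal action-value function q*. Fix a behavior policy π such that the induced chain on S × A is irreducible and aperiodic with stationary distribution μ on S × A. At each step t, draw (S_t, A_t) ~ μ independently across t and S_{t+1} ~ p(·|S_t, A_t), and update q_{t+1}(s,a) = q_t(s,a) + α_t·(r(S_t,A_t) + γ·max_b q_t(S_{t+1}, b) − q_t(S_t, A_t))·𝟙[(s,a) = (S_t, A_t)], where {α_t} satisfies the Robbins–Monro condition. Then q_t → q* almost surely. -/

import Mathlib

/-!
Write `T` for the Bellman optimality operator and `y_t = (S_t, A_t)`. Averaging the update over the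
fresh sample `(y_t, S_{t+1})` turns the recursion into
`q_{t+1} = q_t + α_t (μd · (T q_t - q_t) + g_t)`, where `g_t` has mean zero given the past.

* Irreducibility makes `μd` strictly positive (`stationary_pos`), so `q ↦ q + μd · (T q - q)`
  contracts the sup-distance to `qstar` by the factor `1 - (min μd) (1 - γ) < 1`.
* The iterates, and hence the noise `g_t`, are bounded by a deterministic constant
  (`exists_bound_QLearning`).
* Therefore `∑ α_t g_t` is an `L²`-bounded martingale and converges almost surely
  (`ae_exists_tendsto_weighted_noise`). Since all objects depend on finitely many coordinates with
  values in a finite set, the martingale property reduces to a finite sum over the last coordinate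
  (`integral_eq_zero_of_average_eq_zero`).
* On the event of convergence the rest is deterministic: the contracting recursion perturbed by a
  convergent series tends to its fixed point (`tendsto_zero_of_perturbed_contraction`), because
  `∑ α_t = ∞`.
-/

open Finset Matrix MeasureTheory Filter

/-- The set of return times of state `i` under the stochastic matrix `P`. -/
def returnTimes {Y : Type*} [Fintype Y] [DecidableEq Y] (P : Matrix Y Y ℝ) (i : Y) : Set ℕ :=
  {n | 1 ≤ n ∧ 0 < (P ^ n) i i}

variable {S A : Type*} [Fintype S] [Fintype A] [Nonempty S] [Nonempty A]

/-- The Bellman optimality operator of a finite MDP. -/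
noncomputable def bellmanOpt (r : S × A → ℝ) (p : S × A → S → ℝ) (γ : ℝ)
    (q : S × A → ℝ) : S × A → ℝ :=
  fun y => r y + γ * ∑ s', p y s' * ⨆ a', q (s', a')

/-! ### Functions of finitely many coordinates under an i.i.d. measure -/

section Prefix

variable {Y : Type*}

/-- The first `n` coordinates of a sample path. -/
def pathPrefix (n : ℕ) (ω : ℕ → Y) : Fin n → Y := fun i => ω i

/-- Extension of a finite word to a sample path by the constant letter `y₀`; a right inverse of
`pathPrefix n`. -/
def extendPath (y₀ : Y) (n : ℕ) (x : Fin n → Y) : ℕ → Y :=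
  fun i => if h : i < n then x ⟨i, h⟩ else y₀

/-- `F` depends only on the coordinates `0, …, n - 1` of the sample path. -/
def DependsOnPrefix {β : Type*} (n : ℕ) (F : (ℕ → Y) → β) : Prop :=
  ∀ ω ω' : ℕ → Y, (∀ i < n, ω i = ω' i) → F ω = F ω'

lemma DependsOnPrefix.mono {β : Type*} {m n : ℕ} (hmn : m ≤ n) {F : (ℕ → Y) → β}
    (hF : DependsOnPrefix m F) : DependsOnPrefix n F :=
  fun ω ω' h => hF ω ω' fun i hi => h i (hi.trans_le hmn)

lemma DependsOnPrefix.eq_extend {β : Type*} {n : ℕ} {F : (ℕ → Y) → β}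
    (hF : DependsOnPrefix n F) (y₀ : Y) (ω : ℕ → Y) :
    F ω = F (extendPath y₀ n (pathPrefix n ω)) := by
  apply hF
  intro i hi
  simp [extendPath, pathPrefix, hi]

variable [MeasurableSpace Y]

lemma measurable_pathPrefix (n : ℕ) : Measurable (pathPrefix (Y := Y) n) :=
  measurable_pi_lambda _ fun _ => measurable_pi_apply _

/-- The filtration whose `n`-th σ-algebra is generated by the first `n` coordinates. -/
def prefixFiltration (Y : Type*) [MeasurableSpace Y] :
    Filtration ℕ (inferInstance : MeasurableSpace (ℕ → Y)) where
  seq n := MeasurableSpace.comap (pathPrefix n) inferInstance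
  mono' := by
    intro m n hmn
    have h : pathPrefix (Y := Y) m
        = (fun x : Fin n → Y => fun i : Fin m => x (Fin.castLE hmn i)) ∘ pathPrefix n := by
      funext ω i
      simp [pathPrefix]
    have hmeas : Measurable (fun x : Fin n → Y => fun i : Fin m => x (Fin.castLE hmn i)) :=
      measurable_pi_lambda _ fun _ => measurable_pi_apply _
    change MeasurableSpace.comap (pathPrefix m) _ ≤ MeasurableSpace.comap (pathPrefix n) _
    rw [h, ← MeasurableSpace.comap_comp]
    exact MeasurableSpace.comap_mono hmeas.comap_le
  le' n := (measurable_pathPrefix n).comap_le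

variable [Fintype Y] [MeasurableSingletonClass Y] [Nonempty Y]

lemma DependsOnPrefix.stronglyMeasurable {n : ℕ} {F : (ℕ → Y) → ℝ} (hF : DependsOnPrefix n F) :
    StronglyMeasurable[prefixFiltration Y n] F := by
  obtain ⟨y₀⟩ := ‹Nonempty Y›
  have h : F = (fun x => F (extendPath y₀ n x)) ∘ pathPrefix n := funext (hF.eq_extend y₀)
  rw [h]
  have hm : Measurable[prefixFiltration Y n] (pathPrefix (Y := Y) n) :=
    comap_measurable _
  exact (Measurable.of_discrete.comp hm).stronglyMeasurable

lemma DependsOnPrefix.integrable {n : ℕ} {F : (ℕ → Y) → ℝ} (hF : DependsOnPrefix n F)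
    (μ : Measure (ℕ → Y)) [IsFiniteMeasure μ] : Integrable F μ := by
  obtain ⟨y₀⟩ := ‹Nonempty Y›
  have h : F = (fun x => F (extendPath y₀ n x)) ∘ pathPrefix n := funext (hF.eq_extend y₀)
  rw [h]
  exact Integrable.comp_measurable Integrable.of_finite (measurable_pathPrefix n)

/-- If averaging `F` over its last relevant coordinate always gives zero, then `F` has mean zero.
This replaces the conditional expectation given the past. -/
lemma integral_eq_zero_of_average_eq_zero [DecidableEq Y] (ν : Y → ℝ) (hν : ∀ y, 0 ≤ ν y)
    (μ : Measure (ℕ → Y)) [IsProbabilityMeasure μ]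
    (hμ : ∀ (n : ℕ) (ys : ℕ → Y), μ {ω | ∀ i ≤ n, ω i = ys i} =
      ENNReal.ofReal (∏ i ∈ Finset.range (n + 1), ν (ys i)))
    {k : ℕ} {F : (ℕ → Y) → ℝ} (hF : DependsOnPrefix (k + 1) F)
    (h0 : ∀ ω, ∑ y, ν y * F (Function.update ω k y) = 0) : ∫ ω, F ω ∂μ = 0 := by
  have hne := ‹Nonempty Y›
  obtain ⟨y₀⟩ := hne
  have hint : ∫ ω, F ω ∂μ
      = ∑ x : Fin (k + 1) → Y, (∏ i, ν (x i)) * F (extendPath y₀ (k + 1) x) := by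
    have h1 : ∫ ω, F ω ∂μ
        = ∫ x, F (extendPath y₀ (k + 1) x) ∂(μ.map (pathPrefix (k + 1))) := by
      rw [integral_map (measurable_pathPrefix _).aemeasurable
        (Measurable.of_discrete.aestronglyMeasurable)]
      exact integral_congr_ae (Eventually.of_forall (hF.eq_extend y₀))
    have := Measure.isProbabilityMeasure_map (μ := μ)
      (measurable_pathPrefix (Y := Y) (k + 1)).aemeasurable
    rw [h1, integral_fintype Integrable.of_finite]
    refine Finset.sum_congr rfl fun x _ => ?_
    rw [smul_eq_mul]
    congr 1
    rw [measureReal_def, Measure.map_apply (measurable_pathPrefix _) (measurableSet_singleton _)]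
    have hset : pathPrefix (k + 1) ⁻¹' {x}
        = {ω : ℕ → Y | ∀ i ≤ k, ω i = extendPath y₀ (k + 1) x i} := by
      ext ω
      simp only [Set.mem_preimage, Set.mem_singleton_iff, Set.mem_ofPred_eq]
      constructor
      · rintro rfl i hi
        simp [extendPath, pathPrefix, Nat.lt_succ_of_le hi]
      · intro h
        funext i
        have := h i (Nat.lt_succ_iff.mp i.2)
        simpa only [extendPath, pathPrefix, i.2, dite_true] using this
    rw [hset, hμ, ENNReal.toReal_ofReal (Finset.prod_nonneg fun i _ => hν _),
      Finset.prod_range]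
    exact Finset.prod_congr rfl fun i _ => by simp only [extendPath, i.2, dite_true]
  rw [hint, ← (Fin.snocEquiv (fun _ : Fin (k + 1) => Y)).sum_comp, Fintype.sum_prod_type_right]
  refine Finset.sum_eq_zero fun x _ => ?_
  have h2 : ∀ y : Y, (∏ i, ν ((Fin.snocEquiv (fun _ : Fin (k + 1) => Y)) (y, x) i)) *
      F (extendPath y₀ (k + 1) ((Fin.snocEquiv (fun _ : Fin (k + 1) => Y)) (y, x)))
      = (∏ i, ν (x i)) * (ν y * F (Function.update (extendPath y₀ k x) k y)) := by
    intro y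
    have h3 : extendPath y₀ (k + 1) ((Fin.snocEquiv (fun _ : Fin (k + 1) => Y)) (y, x))
        = Function.update (extendPath y₀ k x) k y := by
      funext i
      rcases lt_trichotomy i k with hi | hi | hi
      · simp [extendPath, Fin.snocEquiv, Fin.snoc, hi, hi.ne, hi.trans (Nat.lt_succ_self k)]
      · subst hi
        simp [extendPath, Fin.snocEquiv, Fin.snoc]
      · have h4 : ¬ i < k + 1 := by omega
        have h5 : ¬ i < k := by omega
        simp [extendPath, h4, h5, hi.ne']
    rw [h3, Fin.prod_univ_castSucc]
    simp [Fin.snocEquiv, mul_assoc]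
  rw [Finset.sum_congr rfl fun y _ => h2 y, ← Finset.mul_sum, h0, mul_zero]

end Prefix

/-! ### Almost sure convergence of square-summable weighted noise -/

/-- The weighted partial sums of a bounded martingale difference sequence form an `L²`-bounded
martingale when the weights are square summable, hence converge almost surely. -/
lemma ae_exists_tendsto_weighted_noise {Y : Type*} [MeasurableSpace Y] [Fintype Y]
    [MeasurableSingletonClass Y] [Nonempty Y] [DecidableEq Y] (ν : Y → ℝ) (hν : ∀ y, 0 ≤ ν y)
    (μ : Measure (ℕ → Y)) [IsProbabilityMeasure μ]
    (hμ : ∀ (n : ℕ) (ys : ℕ → Y), μ {ω | ∀ i ≤ n, ω i = ys i} =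
      ENNReal.ofReal (∏ i ∈ Finset.range (n + 1), ν (ys i)))
    (α : ℕ → ℝ) (hα : Summable fun t => (α t) ^ 2)
    (g : ℕ → (ℕ → Y) → ℝ) (hg : ∀ k, DependsOnPrefix (k + 1) (g k))
    (C : ℝ) (hC : ∀ k ω, |g k ω| ≤ C)
    (h0 : ∀ k ω, ∑ y, ν y * g k (Function.update ω k y) = 0) :
    ∀ᵐ ω ∂μ, ∃ L, Tendsto (fun n => ∑ k ∈ Finset.range n, α k * g k ω) atTop (nhds L) := by
  set N : ℕ → (ℕ → Y) → ℝ := fun n ω => ∑ k ∈ Finset.range n, α k * g k ω with hN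
  have hNdep : ∀ n, DependsOnPrefix n (N n) := by
    intro n ω ω' h
    refine Finset.sum_congr rfl fun k hk => ?_
    rw [hg k ω ω' fun i hi => h i (by have := Finset.mem_range.mp hk; omega)]
  -- The increment at time `k` is orthogonal to every function of the past.
  have horth : ∀ (k : ℕ) (H : (ℕ → Y) → ℝ), DependsOnPrefix k H → ∫ ω, H ω * g k ω ∂μ = 0 := by
    intro k H hH
    apply integral_eq_zero_of_average_eq_zero ν hν μ hμ (k := k)
    · intro ω ω' h
      change H ω * g k ω = H ω' * g k ω'
      rw [hg k ω ω' h, (hH.mono (Nat.le_succ k)) ω ω' h]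
    · intro ω
      have h1 : ∀ y, H (Function.update ω k y) = H ω := fun y =>
        hH _ _ fun i hi => by simp [hi.ne]
      simp only [h1]
      rw [← mul_zero (H ω), ← h0 k ω, Finset.mul_sum]
      exact Finset.sum_congr rfl fun y _ => by ring
  have hmart : Martingale N (prefixFiltration Y) μ := by
    apply martingale_of_setIntegral_eq_succ
    · exact fun n => (hNdep n).stronglyMeasurable
    · exact fun n => (hNdep n).integrable μ
    · rintro k s ⟨B, hB, rfl⟩
      have hms : MeasurableSet (pathPrefix k ⁻¹' B : Set (ℕ → Y)) := measurable_pathPrefix k hB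
      have hsucc : ∀ ω, N (k + 1) ω = N k ω + α k * g k ω := fun ω =>
        Finset.sum_range_succ _ _
      have hgint : Integrable (fun ω => α k * g k ω) μ := ((hg k).integrable μ).const_mul _
      simp only [hsucc]
      rw [integral_add ((hNdep k).integrable μ).integrableOn hgint.integrableOn]
      have : ∫ ω in pathPrefix k ⁻¹' B, α k * g k ω ∂μ = 0 := by
        rw [← integral_indicator hms]
        have h2 := horth k ((pathPrefix k ⁻¹' B).indicator fun _ => α k) (by
          intro ω ω' h
          have : pathPrefix k ω = pathPrefix k ω' := funext fun i => h i i.2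
          have hiff : ω ∈ (pathPrefix k ⁻¹' B : Set (ℕ → Y)) ↔ ω' ∈ (pathPrefix k ⁻¹' B) := by
            rw [Set.mem_preimage, Set.mem_preimage, this]
          by_cases hω : ω ∈ (pathPrefix k ⁻¹' B : Set (ℕ → Y))
          · rw [Set.indicator_of_mem hω, Set.indicator_of_mem (hiff.mp hω)]
          · rw [Set.indicator_of_notMem hω, Set.indicator_of_notMem (hiff.not.mp hω)])
        rw [← h2]
        refine integral_congr_ae (Eventually.of_forall fun ω => ?_)
        by_cases hω : ω ∈ (pathPrefix k ⁻¹' B : Set (ℕ → Y)) <;> simp [Set.indicator, hω]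
      rw [this, add_zero]
  have hsq : ∀ n, ∫ ω, (N n ω) ^ 2 ∂μ ≤ ∑ k ∈ Finset.range n, (α k) ^ 2 * C ^ 2 := by
    intro n
    induction n with
    | zero => simp [hN]
    | succ k ih =>
      have hexp : ∀ ω, (N (k + 1) ω) ^ 2
          = (N k ω) ^ 2 + (2 * α k * N k ω) * g k ω + (α k) ^ 2 * (g k ω) ^ 2 := by
        intro ω
        have : N (k + 1) ω = N k ω + α k * g k ω := Finset.sum_range_succ _ _
        rw [this]; ring
      have hd1 : DependsOnPrefix k fun ω => (N k ω) ^ 2 := fun ω ω' h => by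
        simp only [hNdep k ω ω' h]
      have hd0 : DependsOnPrefix k fun ω => 2 * α k * N k ω := fun ω ω' h => by
        simp only [hNdep k ω ω' h]
      have hd2 : DependsOnPrefix (k + 1) fun ω => (2 * α k * N k ω) * g k ω := fun ω ω' h => by
        simp only [((hNdep k).mono (Nat.le_succ k)) ω ω' h, hg k ω ω' h]
      have hd3 : DependsOnPrefix (k + 1) fun ω => (α k) ^ 2 * (g k ω) ^ 2 := fun ω ω' h => by
        simp only [hg k ω ω' h]
      have hle : ∫ ω, (α k) ^ 2 * (g k ω) ^ 2 ∂μ ≤ (α k) ^ 2 * C ^ 2 := by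
        have : ∫ ω, (α k) ^ 2 * (g k ω) ^ 2 ∂μ ≤ ∫ _, (α k) ^ 2 * C ^ 2 ∂μ := by
          refine integral_mono (hd3.integrable μ) (integrable_const _) fun ω => ?_
          exact mul_le_mul_of_nonneg_left (sq_le_sq.mpr ((hC k ω).trans (le_abs_self C)))
            (sq_nonneg _)
        simpa using this
      simp only [hexp]
      have hd12 : Integrable (fun ω => (N k ω) ^ 2 + (2 * α k * N k ω) * g k ω) μ :=
        (hd1.integrable μ).add (hd2.integrable μ)
      rw [integral_add hd12 (hd3.integrable μ), integral_add (hd1.integrable μ) (hd2.integrable μ), horth k _ hd0, Finset.sum_range_succ]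
      linarith
  set R : ℝ := 1 + (∑' k, (α k) ^ 2) * C ^ 2 with hR
  have hL1 : ∀ n, eLpNorm (N n) 1 μ ≤ (R.toNNReal : ENNReal) := by
    intro n
    have hd : DependsOnPrefix n fun ω => 1 + (N n ω) ^ 2 := fun ω ω' h => by
      simp only [hNdep n ω ω' h]
    have hd' : DependsOnPrefix n fun ω => (N n ω) ^ 2 := fun ω ω' h => by
      simp only [hNdep n ω ω' h]
    rw [eLpNorm_one_eq_lintegral_enorm,
      ← ofReal_integral_norm_eq_lintegral_enorm ((hNdep n).integrable μ)]
    apply ENNReal.ofReal_le_ofReal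
    calc ∫ ω, ‖N n ω‖ ∂μ ≤ ∫ ω, (1 + (N n ω) ^ 2) ∂μ := by
          refine integral_mono ((hNdep n).integrable μ).norm (hd.integrable μ) fun ω => ?_
          simp only [Real.norm_eq_abs]
          nlinarith [sq_abs (N n ω), sq_nonneg (|N n ω| - 1), abs_nonneg (N n ω)]
      _ = 1 + ∫ ω, (N n ω) ^ 2 ∂μ := by
          rw [integral_add (integrable_const _) (hd'.integrable μ)]; simp
      _ ≤ R := by
          have h1 := hsq n
          rw [← Finset.sum_mul] at h1
          have h2 : ∑ k ∈ Finset.range n, (α k) ^ 2 ≤ ∑' k, (α k) ^ 2 :=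
            hα.sum_le_tsum _ fun i _ => sq_nonneg _
          have := mul_le_mul_of_nonneg_right h2 (sq_nonneg C)
          linarith
  filter_upwards [hmart.submartingale.ae_tendsto_limitProcess hL1] with ω hω
  exact ⟨_, hω⟩

/-! ### Deterministic recursions -/

/-- A nonnegative sequence contracted at rate `c α_t` and driven by `α_t ε_t` with `ε_t → 0` tends
to zero, because `∏ (1 - c α_t) ≤ exp (-c ∑ α_t) → 0`. -/
lemma tendsto_zero_of_contracting_recursion (a α ε : ℕ → ℝ) (c : ℝ) (hc : 0 < c)
    (ha : ∀ t, 0 ≤ a t) (hα0 : ∀ t, 0 < α t)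
    (hαlim : Tendsto α atTop (nhds 0))
    (hαsum : Tendsto (fun n => ∑ k ∈ Finset.range n, α k) atTop atTop)
    (hε : Tendsto ε atTop (nhds 0))
    (hrec : ∀ᶠ t in atTop, a (t + 1) ≤ (1 - c * α t) * a t + α t * ε t) :
    Tendsto a atTop (nhds 0) := by
  rw [Metric.tendsto_atTop]
  intro δ hδ
  have hα1 : ∀ᶠ t in atTop, c * α t ≤ 1 := by
    have : Tendsto (fun t => c * α t) atTop (nhds 0) := by simpa using hαlim.const_mul c
    exact this.eventually_le_const one_pos
  have hε1 : ∀ᶠ t in atTop, ε t ≤ c * (δ / 2) := hε.eventually_le_const (by positivity)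
  obtain ⟨T, hT⟩ := eventually_atTop.mp (hα1.and (hε1.and hrec))
  set D : ℝ := |a T - δ / 2| with hD
  -- The excess of `a` over `δ / 2` contracts by the factor `1 - c α_t ≤ exp (-c α_t)`.
  have hbound : ∀ t, T ≤ t → a t - δ / 2 ≤
      D * Real.exp (-(c * (∑ k ∈ Finset.range t, α k - ∑ k ∈ Finset.range T, α k))) := by
    intro t ht
    induction t, ht using Nat.le_induction with
    | base => simp [hD, le_abs_self]
    | succ t ht ih =>
      obtain ⟨h1, h2, h3⟩ := hT t ht
      have h4 : a (t + 1) - δ / 2 ≤ (1 - c * α t) * (a t - δ / 2) := by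
        nlinarith [mul_le_mul_of_nonneg_left h2 (hα0 t).le]
      have h5 : 1 - c * α t ≤ Real.exp (-(c * α t)) := by
        have := Real.add_one_le_exp (-(c * α t)); linarith
      have hE : 0 ≤ D * Real.exp (-(c * (∑ k ∈ Finset.range t, α k
          - ∑ k ∈ Finset.range T, α k))) := by positivity
      calc a (t + 1) - δ / 2 ≤ (1 - c * α t) * (a t - δ / 2) := h4
        _ ≤ (1 - c * α t) * (D * Real.exp (-(c * (∑ k ∈ Finset.range t, α k
          - ∑ k ∈ Finset.range T, α k)))) := mul_le_mul_of_nonneg_left ih (by linarith)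
        _ ≤ Real.exp (-(c * α t)) * (D * Real.exp (-(c * (∑ k ∈ Finset.range t, α k
          - ∑ k ∈ Finset.range T, α k)))) := mul_le_mul_of_nonneg_right h5 hE
        _ = _ := by
          rw [mul_left_comm, ← Real.exp_add, Finset.sum_range_succ]
          congr 2; ring
  have hlim : Tendsto (fun t => D * Real.exp (-(c * (∑ k ∈ Finset.range t, α k
      - ∑ k ∈ Finset.range T, α k)))) atTop (nhds 0) := by
    have h1 : Tendsto (fun t => c * (∑ k ∈ Finset.range t, α k
        - ∑ k ∈ Finset.range T, α k)) atTop atTop :=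
      (tendsto_atTop_add_const_right _ _ hαsum).const_mul_atTop hc
    simpa using (Real.tendsto_exp_neg_atTop_nhds_zero.comp h1).const_mul D
  obtain ⟨T', hT'⟩ := eventually_atTop.mp (hlim.eventually_lt_const (half_pos hδ))
  refine ⟨max T T', fun t ht => ?_⟩
  have h1 := hbound t (le_of_max_le_left ht)
  have h2 := hT' t (le_of_max_le_right ht)
  rw [Real.dist_eq, sub_zero, abs_of_nonneg (ha t)]
  linarith

/-- Stochastic approximation along one sample path: an iteration towards a map `G` that contracts
to the origin converges to it when the accumulated perturbation `∑ d_t` converges. The shifted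
sequence `x_t + (L - ∑_{k < t} d_k)` obeys an unperturbed recursion up to a vanishing error. -/
lemma tendsto_zero_of_perturbed_contraction {E : Type*} [NormedAddCommGroup E] [NormedSpace ℝ E]
    (x d G : ℕ → E) (α : ℕ → ℝ) (L : E) (κ : ℝ) (hκ0 : 0 ≤ κ) (hκ : κ < 1)
    (hG : ∀ t, ‖G t‖ ≤ κ * ‖x t‖)
    (hx : ∀ t, x (t + 1) = x t + α t • (G t - x t) + d t)
    (hd : Tendsto (fun n => ∑ k ∈ Finset.range n, d k) atTop (nhds L))
    (hα0 : ∀ t, 0 < α t) (hαlim : Tendsto α atTop (nhds 0))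
    (hαsum : Tendsto (fun n => ∑ k ∈ Finset.range n, α k) atTop atTop) :
    Tendsto x atTop (nhds 0) := by
  set e : ℕ → E := fun t => L - ∑ k ∈ Finset.range t, d k with he
  have helim : Tendsto e atTop (nhds 0) := by
    simpa using (tendsto_const_nhds (x := L)).sub hd
  have hznorm : Tendsto (fun t => ‖x t + e t‖) atTop (nhds 0) := by
    apply tendsto_zero_of_contracting_recursion _ α (fun t => (1 + κ) * ‖e t‖) (1 - κ)
      (by linarith) (fun t => norm_nonneg _) hα0 hαlim hαsum
    · simpa using (helim.norm.const_mul (1 + κ))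
    · filter_upwards [hαlim.eventually_le_const one_pos] with t ht
      have h1 : x (t + 1) + e (t + 1)
          = (1 - α t) • (x t + e t) + α t • (G t + e t) := by
        simp only [he, hx, Finset.sum_range_succ]
        module
      have h2 : ‖x t‖ ≤ ‖x t + e t‖ + ‖e t‖ := by
        simpa using norm_sub_le (x t + e t) (e t)
      have h3 : ‖G t + e t‖ ≤ κ * (‖x t + e t‖ + ‖e t‖) + ‖e t‖ :=
        (norm_add_le _ _).trans (add_le_add ((hG t).trans
          (mul_le_mul_of_nonneg_left h2 hκ0)) le_rfl)
      rw [h1]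
      calc ‖(1 - α t) • (x t + e t) + α t • (G t + e t)‖
          ≤ (1 - α t) * ‖x t + e t‖ + α t * ‖G t + e t‖ := by
            refine (norm_add_le _ _).trans (le_of_eq ?_)
            rw [norm_smul, norm_smul, Real.norm_of_nonneg (by linarith),
              Real.norm_of_nonneg (hα0 t).le]
        _ ≤ (1 - α t) * ‖x t + e t‖ + α t * (κ * (‖x t + e t‖ + ‖e t‖) + ‖e t‖) := by
            have := mul_le_mul_of_nonneg_left h3 (hα0 t).le
            linarith
        _ = _ := by ring
  have := (tendsto_zero_iff_norm_tendsto_zero.mpr hznorm).sub helim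
  simpa using this

/-! ### The stationary distribution and the maximum over actions -/

/-- The stationary distribution of an irreducible chain charges every state. -/
lemma stationary_pos {Y : Type*} [Fintype Y] [DecidableEq Y] (P : Matrix Y Y ℝ)
    (hP : ∀ y y', 0 ≤ P y y') (hirr : ∀ y y', ∃ n : ℕ, 0 < (P ^ n) y y')
    (m : Y → ℝ) (hm : ∀ y, 0 ≤ m y) (hsum : ∑ y, m y = 1)
    (hstat : ∀ y', ∑ y, m y * P y y' = m y') (y : Y) : 0 < m y := by
  have hstatn : ∀ n : ℕ, m ᵥ* (P ^ n) = m := by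
    intro n
    induction n with
    | zero => simp
    | succ n ih =>
      rw [pow_succ, ← Matrix.vecMul_vecMul, ih]
      funext y'
      exact hstat y'
  have hPn : ∀ n : ℕ, ∀ z z', 0 ≤ (P ^ n) z z' := by
    intro n
    induction n with
    | zero =>
      intro z z'
      rw [pow_zero, Matrix.one_apply]
      split_ifs <;> norm_num
    | succ n ih =>
      intro z z'
      rw [pow_succ, Matrix.mul_apply]
      exact Finset.sum_nonneg fun w _ => mul_nonneg (ih _ _) (hP _ _)
  obtain ⟨z, hz⟩ : ∃ z, 0 < m z := by
    by_contra! h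
    have : ∑ y, m y ≤ 0 := Finset.sum_nonpos fun y _ => h y
    linarith
  obtain ⟨n, hn⟩ := hirr z y
  have h1 : m y = ∑ w, m w * (P ^ n) w y := (congrFun (hstatn n) y).symm
  rw [h1]
  exact Finset.sum_pos' (fun w _ => mul_nonneg (hm w) (hPn n w y))
    ⟨z, Finset.mem_univ z, mul_pos hz hn⟩

lemma abs_iSup_sub_iSup_le {ι : Type*} [Finite ι] [Nonempty ι] (f g : ι → ℝ) (D : ℝ)
    (h : ∀ i, |f i - g i| ≤ D) : |(⨆ i, f i) - ⨆ i, g i| ≤ D := by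
  have hf : BddAbove (Set.range f) := Set.finite_range f |>.bddAbove
  have hg : BddAbove (Set.range g) := Set.finite_range g |>.bddAbove
  rw [abs_sub_le_iff]
  constructor
  · rw [sub_le_iff_le_add]
    refine ciSup_le fun i => ?_
    have := le_ciSup hg i
    have := (abs_sub_le_iff.mp (h i)).1
    linarith
  · rw [sub_le_iff_le_add]
    refine ciSup_le fun i => ?_
    have := le_ciSup hf i
    have := (abs_sub_le_iff.mp (h i)).2
    linarith

lemma abs_iSup_le {ι : Type*} [Finite ι] [Nonempty ι] (f : ι → ℝ) (D : ℝ)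
    (h : ∀ i, |f i| ≤ D) : |⨆ i, f i| ≤ D := by
  simpa using abs_iSup_sub_iSup_le f (fun _ => 0) D (by simpa using h)

/-! ### Uniform boundedness of the iterates -/

/-- Deterministic bound on the Q-learning iterates. Once `α t ≤ 1`, every update is a convex
combination of the old value and a target of size at most `R + γ B`, which is at most `B` as soon
as `R ≤ (1 - γ) B`; the finitely many earlier updates are bounded one by one. -/
lemma exists_bound_QLearning [DecidableEq S] [DecidableEq A]
    (r : S × A → ℝ) (γ : ℝ) (hγ0 : 0 ≤ γ) (hγ1 : γ < 1)
    (α : ℕ → ℝ) (hαpos : ∀ t, 0 < α t) (hαlim : Tendsto α atTop (nhds 0))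
    (q₀ : S × A → ℝ) (q : ℕ → (ℕ → (S × A) × S) → (S × A → ℝ))
    (hq0 : ∀ ω, q 0 ω = q₀)
    (hqstep : ∀ t ω y, q (t + 1) ω y = q t ω y +
      α t * (r (ω t).1 + γ * (⨆ b, q t ω ((ω t).2, b)) - q t ω (ω t).1)
        * (if y = (ω t).1 then 1 else 0)) :
    ∃ B, 0 ≤ B ∧ ∀ t ω y, |q t ω y| ≤ B := by
  have hr : ∀ y, |r y| ≤ ‖r‖ := fun y => norm_le_pi_norm r y
  have hpre : ∀ t, ∃ B, 0 ≤ B ∧ ‖r‖ ≤ (1 - γ) * B ∧ ∀ s ≤ t, ∀ ω y, |q s ω y| ≤ B := by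
    intro t
    induction t with
    | zero =>
      refine ⟨max ‖q₀‖ (‖r‖ / (1 - γ)), le_max_of_le_left (norm_nonneg _), ?_, ?_⟩
      · rw [← div_le_iff₀' (by linarith)]
        exact le_max_right _ _
      · intro s hs ω y
        obtain rfl : s = 0 := by omega
        rw [hq0]
        exact (norm_le_pi_norm q₀ y).trans (le_max_left _ _)
    | succ t ih =>
      obtain ⟨B, hB0, hBr, hB⟩ := ih
      have hα := hαpos t
      have hK : 0 ≤ α t * (‖r‖ + γ * B + B) := by positivity
      refine ⟨B + α t * (‖r‖ + γ * B + B), by positivity, ?_, ?_⟩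
      · nlinarith
      · intro s hs ω y
        rcases Nat.lt_or_ge t s with h | h
        · obtain rfl : s = t + 1 := by omega
          have h1 := hB t le_rfl ω
          have h2 := abs_iSup_le (fun b => q t ω ((ω t).2, b)) B fun b => h1 _
          rw [hqstep]
          have h3 : |r (ω t).1 + γ * (⨆ b, q t ω ((ω t).2, b)) - q t ω (ω t).1|
              ≤ ‖r‖ + γ * B + B := by
            refine (abs_sub _ _).trans (add_le_add ((abs_add_le _ _).trans
              (add_le_add (hr _) ?_)) (h1 _))
            rw [abs_mul, abs_of_nonneg hγ0]
            exact mul_le_mul_of_nonneg_left h2 hγ0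
          refine (abs_add_le _ _).trans (add_le_add (h1 y) ?_)
          split_ifs
          · rw [mul_one, abs_mul, abs_of_pos hα]
            exact mul_le_mul_of_nonneg_left h3 hα.le
          · simpa using hK
        · exact (hB s h ω y).trans (by linarith)
  obtain ⟨T, hT⟩ := eventually_atTop.mp (hαlim.eventually_le_const one_pos)
  obtain ⟨B, hB0, hBr, hB⟩ := hpre T
  refine ⟨B, hB0, fun t => ?_⟩
  rcases le_total t T with h | h
  · exact hB t h
  · induction t, h using Nat.le_induction with
    | base => exact hB T le_rfl
    | succ t ht ih =>
      intro ω y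
      have hα := hαpos t
      have hα1 := hT t ht
      rw [hqstep]
      split_ifs with hy
      · subst hy
        have h2 := abs_iSup_le (fun b => q t ω ((ω t).2, b)) B fun b => ih ω _
        have h3 : |r (ω t).1 + γ * (⨆ b, q t ω ((ω t).2, b))| ≤ B := by
          have h4 : |γ * (⨆ b, q t ω ((ω t).2, b))| ≤ γ * B := by
            rw [abs_mul, abs_of_nonneg hγ0]
            exact mul_le_mul_of_nonneg_left h2 hγ0
          have := abs_add_le (r (ω t).1) (γ * (⨆ b, q t ω ((ω t).2, b)))
          have := hr (ω t).1
          linarith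
        have h5 := abs_le.mp h3
        have h6 := abs_le.mp (ih ω (ω t).1)
        rw [abs_le]
        constructor <;> nlinarith
      · simpa using ih ω y

/-! ### Convergence -/

/-- Almost sure convergence of Q-learning with i.i.d. samples: at each step `t` an
independent tuple is drawn with `(S_t, A_t) ~ μd` (the stationary distribution of the
irreducible aperiodic chain on `S × A` induced by the behavior policy `π`) and
`S_{t+1} ~ p(·|S_t, A_t)`; the sample space carries the i.i.d. product measure,
characterized here via cylinder probabilities. Under Robbins–Monro step sizes the
Q-learning iterates converge almost surely to the optimal action-value function. -/
theorem ae_tendsto_of_QLearning_iid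
    [DecidableEq S] [DecidableEq A]
    [MeasurableSpace S] [MeasurableSingletonClass S]
    [MeasurableSpace A] [MeasurableSingletonClass A]
    -- the MDP
    (r : S × A → ℝ) (p : S × A → S → ℝ)
    (hpnonneg : ∀ y s', 0 ≤ p y s') (hpsum : ∀ y, ∑ s', p y s' = 1)
    (γ : ℝ) (hγ0 : 0 ≤ γ) (hγ1 : γ < 1)
    -- the optimal action-value function
    (qstar : S × A → ℝ) (hqstar : bellmanOpt r p γ qstar = qstar)
    -- the behavior policy and the induced chain on S × A
    (π : S → A → ℝ) (hπnonneg : ∀ s a, 0 ≤ π s a) (hπsum : ∀ s, ∑ a, π s a = 1)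
    (Pind : Matrix (S × A) (S × A) ℝ)
    (hPind : Pind = fun y y' => p y y'.1 * π y'.1 y'.2)
    (hirr : ∀ y y', ∃ n : ℕ, 0 < (Pind ^ n) y y')
    (haper : ∀ y, ∀ e : ℕ, (∀ n ∈ returnTimes Pind y, e ∣ n) → e = 1)
    -- the stationary distribution of the induced chain
    (μd : S × A → ℝ) (hμdnonneg : ∀ y, 0 ≤ μd y) (hμdsum : ∑ y, μd y = 1)
    (hμdstat : ∀ y', ∑ y, μd y * Pind y y' = μd y')
    -- Robbins–Monro step sizes
    (α : ℕ → ℝ) (hαpos : ∀ t, 0 < α t)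
    (hαsum : Tendsto (fun n => ∑ k ∈ Finset.range n, α k) atTop atTop)
    (hαsqsum : Summable (fun t => (α t) ^ 2))
    -- the i.i.d. product measure over tuples ((S_t, A_t), S_{t+1})
    (μ : Measure (ℕ → (S × A) × S)) [IsProbabilityMeasure μ]
    (hμ : ∀ (n : ℕ) (ys : ℕ → (S × A) × S),
      μ {ω | ∀ i ≤ n, ω i = ys i} =
        ENNReal.ofReal (∏ i ∈ Finset.range (n + 1), μd (ys i).1 * p (ys i).1 (ys i).2))
    -- the Q-learning iterates
    (q₀ : S × A → ℝ) (q : ℕ → (ℕ → (S × A) × S) → (S × A → ℝ))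
    (hq0 : ∀ ω, q 0 ω = q₀)
    (hqstep : ∀ t ω y, q (t + 1) ω y = q t ω y +
      α t * (r (ω t).1 + γ * (⨆ b, q t ω ((ω t).2, b)) - q t ω (ω t).1)
        * (if y = (ω t).1 then 1 else 0)) :
    ∀ᵐ ω ∂μ, Tendsto (fun t => q t ω) atTop (nhds qstar) := by
  have hμdpos : ∀ y, 0 < μd y := by
    refine stationary_pos Pind (fun y y' => ?_) hirr μd hμdnonneg hμdsum hμdstat
    rw [hPind]
    exact mul_nonneg (hpnonneg _ _) (hπnonneg _ _)
  have hμdle : ∀ y, μd y ≤ 1 := fun y => by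
    rw [← hμdsum]
    exact Finset.single_le_sum (fun z _ => hμdnonneg z) (Finset.mem_univ y)
  have hαlim : Tendsto α atTop (nhds 0) := by
    have h := (hαsqsum.tendsto_atTop_zero).sqrt
    simpa [Real.sqrt_sq (hαpos _).le] using h
  obtain ⟨B, hB0, hB⟩ := exists_bound_QLearning r γ hγ0 hγ1 α hαpos hαlim q₀ q hq0 hqstep
  have hqdep : ∀ t, DependsOnPrefix t (q t) := by
    intro t
    induction t with
    | zero => intro ω ω' _; rw [hq0, hq0]
    | succ t ih =>
      intro ω ω' h
      funext y
      rw [hqstep, hqstep, (ih.mono (Nat.le_succ t)) ω ω' h, h t (Nat.lt_succ_self t)]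
  -- The one-step sampling law, and the deviation of the sampled update from its mean.
  set ν : (S × A) × S → ℝ := fun z => μd z.1 * p z.1 z.2 with hν
  have hν0 : ∀ z, 0 ≤ ν z := fun z => mul_nonneg (hμdnonneg _) (hpnonneg _ _)
  have hν1 : ∑ z, ν z = 1 := by
    rw [Fintype.sum_prod_type]
    simp only [hν, ← Finset.mul_sum, hpsum, mul_one, hμdsum]
  set g : S × A → ℕ → (ℕ → (S × A) × S) → ℝ := fun y t ω =>
    (r (ω t).1 + γ * (⨆ b, q t ω ((ω t).2, b)) - q t ω (ω t).1)
        * (if y = (ω t).1 then 1 else 0)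
      - μd y * (bellmanOpt r p γ (q t ω) y - q t ω y) with hg
  have hgdep : ∀ y t, DependsOnPrefix (t + 1) (g y t) := by
    intro y t ω ω' h
    simp only [hg]
    rw [((hqdep t).mono (Nat.le_succ t)) ω ω' h, h t (Nat.lt_succ_self t)]
  have hgavg : ∀ y t ω, ∑ z, ν z * g y t (Function.update ω t z) = 0 := by
    intro y t ω
    have h1 : ∀ z, q t (Function.update ω t z) = q t ω := fun z =>
      hqdep t _ _ fun i hi => by simp [hi.ne]
    simp only [hg, h1, Function.update_self, mul_sub, Finset.sum_sub_distrib, ← Finset.sum_mul,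
      hν1, one_mul]
    rw [Fintype.sum_prod_type, Finset.sum_eq_single y]
    · simp only [hν, if_true, mul_one, bellmanOpt]
      have h2 : ∀ s', μd y * p y s' * (r y + γ * (⨆ b, q t ω (s', b)) - q t ω y)
          = μd y * r y * p y s' + μd y * γ * (p y s' * ⨆ b, q t ω (s', b))
            - μd y * q t ω y * p y s' := fun s' => by ring
      simp only [h2, Finset.sum_sub_distrib, Finset.sum_add_distrib, ← Finset.mul_sum, hpsum]
      ring
    · intro y' _ hy'
      refine Finset.sum_eq_zero fun s' _ => ?_
      rw [if_neg (Ne.symm hy')]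
      ring
    · simp
  have hsup : ∀ t ω s, |⨆ b, q t ω (s, b)| ≤ B := fun t ω s =>
    abs_iSup_le (fun b => q t ω (s, b)) B fun b => hB t ω _
  have hbell : ∀ t ω y, |bellmanOpt r p γ (q t ω) y| ≤ ‖r‖ + γ * B := by
    intro t ω y
    refine (abs_add_le _ _).trans (add_le_add (norm_le_pi_norm r y) ?_)
    rw [abs_mul, abs_of_nonneg hγ0]
    refine mul_le_mul_of_nonneg_left ?_ hγ0
    calc |∑ s', p y s' * ⨆ a', q t ω (s', a')| ≤ ∑ s', |p y s' * ⨆ a', q t ω (s', a')| :=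
          Finset.abs_sum_le_sum_abs _ _
      _ ≤ ∑ s', p y s' * B := Finset.sum_le_sum fun s' _ => by
          rw [abs_mul, abs_of_nonneg (hpnonneg _ _)]
          exact mul_le_mul_of_nonneg_left (hsup t ω s') (hpnonneg _ _)
      _ = B := by rw [← Finset.sum_mul, hpsum, one_mul]
  have hgbound : ∀ y t ω, |g y t ω| ≤ (‖r‖ + γ * B + B) + (‖r‖ + γ * B + B) := by
    intro y t ω
    have hK : 0 ≤ ‖r‖ + γ * B + B := by positivity
    refine (abs_sub _ _).trans (add_le_add ?_ ?_)
    · split_ifs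
      · rw [mul_one]
        refine (abs_sub _ _).trans (add_le_add ((abs_add_le _ _).trans
          (add_le_add (norm_le_pi_norm r _) ?_)) (hB _ _ _))
        rw [abs_mul, abs_of_nonneg hγ0]
        exact mul_le_mul_of_nonneg_left (hsup _ _ _) hγ0
      · simpa using hK
    · rw [abs_mul, abs_of_pos (hμdpos y)]
      refine (mul_le_of_le_one_left (abs_nonneg _) (hμdle y)).trans ?_
      exact (abs_sub _ _).trans (add_le_add (hbell _ _ _) (hB _ _ _))
  have hnoise : ∀ᵐ ω ∂μ, ∀ y, ∃ L,
      Tendsto (fun n => ∑ k ∈ Finset.range n, α k * g y k ω) atTop (nhds L) :=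
    ae_all_iff.mpr fun y => ae_exists_tendsto_weighted_noise ν hν0 μ hμ α hαsqsum (g y)
      (hgdep y) _ (hgbound y) (hgavg y)
  obtain ⟨ymin, hymin⟩ := Finite.exists_min μd
  filter_upwards [hnoise] with ω hω
  choose L hL using hω
  -- The mean update contracts towards `qstar` with factor `1 - (min μd) * (1 - γ)`.
  have hx : Tendsto (fun t => q t ω - qstar) atTop (nhds 0) := by
    refine tendsto_zero_of_perturbed_contraction (fun t => q t ω - qstar)
      (fun t y => α t * g y t ω)
      (fun t y => (q t ω y - qstar y) + μd y * (bellmanOpt r p γ (q t ω) y - q t ω y))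
      α L (1 - μd ymin * (1 - γ)) ?_ ?_ ?_ ?_ ?_ hαpos hαlim hαsum
    · nlinarith [hμdle ymin, hμdpos ymin]
    · nlinarith [hμdpos ymin]
    · intro t
      set D : ℝ := ‖q t ω - qstar‖ with hD
      have hD0 : 0 ≤ D := norm_nonneg _
      have hDy : ∀ y, |q t ω y - qstar y| ≤ D := fun y => norm_le_pi_norm (q t ω - qstar) y
      have hκ0 : 0 ≤ 1 - μd ymin * (1 - γ) := by nlinarith [hμdle ymin, hμdpos ymin]
      refine (pi_norm_le_iff_of_nonneg (mul_nonneg hκ0 hD0)).mpr fun y => ?_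
      have hT : |bellmanOpt r p γ (q t ω) y - qstar y| ≤ γ * D := by
        have h1 : bellmanOpt r p γ (q t ω) y - qstar y
            = γ * ∑ s', p y s' * ((⨆ a', q t ω (s', a')) - ⨆ a', qstar (s', a')) := by
          conv_lhs => rw [← hqstar]
          simp only [bellmanOpt, mul_sub, Finset.sum_sub_distrib]
          ring
        rw [h1, abs_mul, abs_of_nonneg hγ0]
        refine mul_le_mul_of_nonneg_left ?_ hγ0
        calc |∑ s', p y s' * ((⨆ a', q t ω (s', a')) - ⨆ a', qstar (s', a'))|
            ≤ ∑ s', |p y s' * ((⨆ a', q t ω (s', a')) - ⨆ a', qstar (s', a'))| :=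
              Finset.abs_sum_le_sum_abs _ _
          _ ≤ ∑ s', p y s' * D := Finset.sum_le_sum fun s' _ => by
              rw [abs_mul, abs_of_nonneg (hpnonneg _ _)]
              exact mul_le_mul_of_nonneg_left
                (abs_iSup_sub_iSup_le _ _ D fun a => hDy _) (hpnonneg _ _)
          _ = D := by rw [← Finset.sum_mul, hpsum, one_mul]
      have h2 : (q t ω y - qstar y) + μd y * (bellmanOpt r p γ (q t ω) y - q t ω y)
          = (1 - μd y) * (q t ω y - qstar y)
            + μd y * (bellmanOpt r p γ (q t ω) y - qstar y) := by ring
      rw [Real.norm_eq_abs, h2]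
      calc |(1 - μd y) * (q t ω y - qstar y) + μd y * (bellmanOpt r p γ (q t ω) y - qstar y)|
          ≤ (1 - μd y) * D + μd y * (γ * D) := by
            refine (abs_add_le _ _).trans (add_le_add ?_ ?_)
            · rw [abs_mul, abs_of_nonneg (by linarith [hμdle y])]
              exact mul_le_mul_of_nonneg_left (hDy y) (by linarith [hμdle y])
            · rw [abs_mul, abs_of_pos (hμdpos y)]
              exact mul_le_mul_of_nonneg_left hT (hμdpos y).le
        _ ≤ (1 - μd ymin * (1 - γ)) * D := by
            nlinarith [mul_le_mul_of_nonneg_right (hymin y)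
              (mul_nonneg (sub_nonneg.mpr hγ1.le) hD0)]
    · intro t
      funext y
      simp only [Pi.sub_apply, Pi.add_apply, Pi.smul_apply, smul_eq_mul, hqstep, hg]
      ring
    · rw [tendsto_pi_nhds]
      intro y
      simpa only [Finset.sum_apply] using hL y
  simpa using hx.add_const qstar
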